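/- arXiv:2412.04221 — 2 statements merged into one kernel-verified Lean document; each statement's English description precedes it below -/
import Mathlib

section
/- Let k be an algebraically closed field, L a finite group of order invertible in k, Q a finite group, and H = L × Q. With V⃗ = V ⊗_k kQ viewed as a (kH, kQ)-bimodule and V⃖ = V* ⊗_k kQ as a (kQ, kH)-bimodule (with actions as above), the direct sum over a set of representatives V of isomorphism classes of irreducible kL-modules of V⃗ ⊗_{kQ} V⃖ is isomorphic, as a (kH, kH)-bimodule, to the identity bimodule kH. -/
/-!
Convolution over `Q` identifies `V⃗ ⊗_{kQ} V⃖` with `(V ⊗ V*) ⊗ kQ`, so it is enough to treat the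
factor `L`, where the claim is the Peter–Weyl decomposition `⨁ V ⊗ V* ≅ kL` by matrix
coefficients. Injectivity is Schur orthogonality: the matrix coefficient `f` of a tensor
`t ∈ Vᵢ ⊗ Vᵢ*`, viewed as the element `∑ f(l) l` of `kL`, acts on `Vⱼ` by `0` if `i ≠ j`, while
`dim Vᵢ` times its action on `Vᵢ` is `|L|` times the endomorphism `t`. Surjectivity comes from
Maschke's theorem: the functions on `L` are a sum of irreducible subrepresentations, and each `f` in
such a subrepresentation is the matrix coefficient of `f` itself and evaluation at `1`.
-/

open TensorProduct MulOpposite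

/-- Irreducibility of a representation. -/
def IsIrreducibleRep (k : Type) [CommRing k] (G : Type) [Group G] {V : Type}
    [AddCommGroup V] [Module k V] (ρ : Representation k G V) : Prop :=
  Nontrivial V ∧ ∀ q : Submodule k V, (∀ g v, v ∈ q → ρ g v ∈ q) → q = ⊥ ∨ q = ⊤

/-- The balancing relations defining `M ⊗_{kG} N` inside `M ⊗[k] N`, for a right `kG`-module
`M` (a representation of `Gᵐᵒᵖ`) and a left `kG`-module `N`;  `M ⊗_{kG} N` is the quotient of
`M ⊗[k] N` by this submodule. -/
def balancedRel (k : Type) [Field k] (G : Type) [Group G]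
    {M N : Type} [AddCommMonoid M] [Module k M] [AddCommMonoid N] [Module k N]
    (σ : Representation k Gᵐᵒᵖ M) (ρ : Representation k G N) :
    Submodule k (M ⊗[k] N) :=
  Submodule.span k {x | ∃ (g : G) (m : M) (n : N),
    x = σ (op g) m ⊗ₜ[k] n + (-1 : k) • (m ⊗ₜ[k] ρ g n)}

section Irreducible

open Representation

variable {k G V : Type*} [Monoid G]

/-- The lattice of subrepresentations of a subrepresentation `W` of `ρ`, identified with the
lattice of subrepresentations of `ρ` below `W`. -/
def subrepresentationOrderIsoIic [Semiring k] [AddCommMonoid V] [Module k V]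
    {ρ : Representation k G V} (W : Subrepresentation ρ) :
    Subrepresentation W.toRepresentation ≃o Set.Iic W where
  toFun U := ⟨⟨U.toSubmodule.map W.toSubmodule.subtype, by
      rintro g _ ⟨u, hu, rfl⟩
      exact ⟨_, U.apply_mem_toSubmodule g hu, rfl⟩⟩,
    Submodule.map_subtype_le _ _⟩
  invFun U := ⟨U.1.toSubmodule.comap W.toSubmodule.subtype,
    fun g _ hu => U.1.apply_mem_toSubmodule g hu⟩
  left_inv U := Subrepresentation.toSubmodule_injective <|
    Submodule.comap_map_eq_of_injective W.toSubmodule.injective_subtype _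
  right_inv U := Subtype.ext <| Subrepresentation.toSubmodule_injective <|
    Submodule.map_comap_eq_of_le <| U.2.trans_eq W.toSubmodule.range_subtype.symm
  map_rel_iff' := Submodule.map_le_map_iff_of_injective W.toSubmodule.injective_subtype _ _

variable [Field k] [AddCommGroup V] [Module k V]

theorem isIrreducible_toRepresentation_iff_isAtom {ρ : Representation k G V}
    {W : Subrepresentation ρ} : W.toRepresentation.IsIrreducible ↔ IsAtom W :=
  (subrepresentationOrderIsoIic W).isSimpleOrder_iff.trans Set.isSimpleOrder_Iic_iff_isAtom

theorem eq_top_of_forall_isIrreducible_le (ρ : Representation k G V)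
    [IsSemisimpleRepresentation ρ] {p : Submodule k V}
    (h : ∀ W : Subrepresentation ρ, W.toRepresentation.IsIrreducible → W.toSubmodule ≤ p) :
    p = ⊤ := by
  have := (isSemisimpleRepresentation_iff_isSemisimpleModule_asModule ρ).1 inferInstance
  let e := Subrepresentation.subrepresentationSubmoduleOrderIso (ρ := ρ)
  refine Submodule.eq_top_iff'.2 fun v => ?_
  have hv : ρ.asModuleEquiv.symm v ∈
      sSup {S : Submodule (MonoidAlgebra k G) ρ.asModule | IsSimpleModule (MonoidAlgebra k G) S} :=
    IsSemisimpleModule.sSup_simples_eq_top (MonoidAlgebra k G) ρ.asModule ▸ Submodule.mem_top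
  rw [sSup_eq_iSup'] at hv
  refine Submodule.iSup_induction _ (motive := fun x => ρ.asModuleEquiv x ∈ p) hv ?_
    p.zero_mem fun _ _ => p.add_mem
  rintro ⟨S, hS⟩ x hx
  refine h (e.symm S) (isIrreducible_toRepresentation_iff_isAtom.2 ?_) hx
  exact (e.symm.isAtom_iff S).2 (isSimpleModule_iff_isAtom.1 hS)

end Irreducible

theorem isIrreducibleRep_iff_isIrreducible {k G V : Type} [Field k] [Group G] [AddCommGroup V]
    [Module k V] {ρ : Representation k G V} :
    IsIrreducibleRep k G ρ ↔ ρ.IsIrreducible := by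
  constructor
  · rintro ⟨_, h⟩
    exact
      { exists_pair_ne := ⟨⊥, ⊤, fun e => bot_ne_top (congrArg Subrepresentation.toSubmodule e)⟩
        eq_bot_or_eq_top := fun W =>
          (h W.toSubmodule fun g v hv => W.apply_mem_toSubmodule g hv).imp
            (fun e => Subrepresentation.toSubmodule_injective e)
            (fun e => Subrepresentation.toSubmodule_injective e) }
  · intro _
    refine ⟨?_, fun q hq => ?_⟩
    · by_contra hV
      rw [not_nontrivial_iff_subsingleton] at hV
      exact bot_ne_top (α := Subrepresentation ρ)
        (Subrepresentation.toSubmodule_injective (Subsingleton.elim _ _))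
    · exact (eq_bot_or_eq_top (⟨q, fun g v hv => hq g v hv⟩ : Subrepresentation ρ)).imp
        (congrArg Subrepresentation.toSubmodule) (congrArg Subrepresentation.toSubmodule)

section SchurOrthogonality

open Representation

variable {k G V W : Type*} [Group G] [Fintype G]

/-- The average (up to the factor `|G|`) `∑ g, σ g ∘ (α ⊗ w) ∘ ρ g⁻¹` over `G` of the rank one
map `α ⊗ w`, an intertwining map from `ρ` to `σ`. -/
noncomputable def averagedRankOne [CommRing k] [AddCommGroup V] [Module k V]
    [AddCommGroup W] [Module k W] (ρ : Representation k G V) (σ : Representation k G W)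
    (α : Module.Dual k V) (w : W) : ρ.IntertwiningMap σ :=
  invariantsEquivIntertwiningMap ρ σ
    ⟨(linHom ρ σ).norm (α.smulRight w), fun g => self_norm_apply _ g _⟩

theorem averagedRankOne_apply [CommRing k] [AddCommGroup V] [Module k V] [AddCommGroup W]
    [Module k W] (ρ : Representation k G V) (σ : Representation k G W) (α : Module.Dual k V)
    (w : W) (v : V) : averagedRankOne ρ σ α w v = ∑ g, α (ρ g⁻¹ v) • σ g w := by
  change (linHom ρ σ).norm (α.smulRight w) v = _
  simp [Representation.norm]

theorem trace_averagedRankOne_self [CommRing k] [AddCommGroup V] [Module k V] [Module.Free k V]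
    [Module.Finite k V] (ρ : Representation k G V) (α : Module.Dual k V) (w : V) :
    LinearMap.trace k V (averagedRankOne ρ ρ α w).toLinearMap = Fintype.card G * α w := by
  have trace_conj (g : G) : LinearMap.trace k V (linHom ρ ρ g (α.smulRight w)) = α w := by
    rw [linHom_apply, LinearMap.trace_comp_comm', LinearMap.comp_assoc,
      ← Module.End.mul_eq_comp (ρ g⁻¹), ← map_mul]
    simp [Module.End.one_eq_id]
  change LinearMap.trace k V ((linHom ρ ρ).norm (α.smulRight w)) = _
  rw [Representation.norm, LinearMap.sum_apply, map_sum]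
  simp [trace_conj, -linHom_apply]

theorem finrank_smul_averagedRankOne_self [Field k] [IsAlgClosed k] [AddCommGroup V] [Module k V]
    [FiniteDimensional k V] (ρ : Representation k G V) [ρ.IsIrreducible] (α : Module.Dual k V)
    (w v : V) :
    (Module.finrank k V : k) • averagedRankOne ρ ρ α w v = (Fintype.card G * α w : k) • v := by
  obtain ⟨c, hc⟩ := IsIrreducible.algebraMap_intertwiningMap_bijective_of_isAlgClosed.2
    (averagedRankOne ρ ρ α w)
  have trace_eq : Module.finrank k V * c = Fintype.card G * α w := by
    have toLinearMap_eq : (algebraMap k (ρ.IntertwiningMap ρ) c).toLinearMap = c • LinearMap.id :=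
      rfl
    rw [← trace_averagedRankOne_self ρ, ← hc, toLinearMap_eq, map_smul, LinearMap.trace_id,
      smul_eq_mul, mul_comm]
  rw [← hc, ← trace_eq, mul_smul]
  simp

end SchurOrthogonality

section MatrixCoefficients

variable {k G V : Type*} [CommSemiring k] [Group G] [AddCommMonoid V] [Module k V]
  (ρ : Representation k G V)

/-- The matrix coefficient `g ↦ α (g⁻¹ v)` of `v ⊗ α`. The inverse makes this map equivariant
for left translation of functions on `G`. -/
noncomputable def matrixCoeff : V ⊗[k] Module.Dual k V →ₗ[k] (G → k) :=
  LinearMap.pi fun g => contractRight k V ∘ₗ LinearMap.rTensor _ (ρ g⁻¹)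

@[simp]
theorem matrixCoeff_tmul (v : V) (α : Module.Dual k V) (g : G) :
    matrixCoeff ρ (v ⊗ₜ α) g = α (ρ g⁻¹ v) := by
  simp [matrixCoeff]

theorem matrixCoeff_rTensor (h g : G) (t : V ⊗[k] Module.Dual k V) :
    matrixCoeff ρ ((ρ h).rTensor _ t) g = matrixCoeff ρ t (h⁻¹ * g) := by
  induction t with
  | zero => simp
  | add s t hs ht => simp [hs, ht]
  | tmul v α => simp

theorem matrixCoeff_lTensor_dualMap (h g : G) (t : V ⊗[k] Module.Dual k V) :
    matrixCoeff ρ ((ρ h).dualMap.lTensor _ t) g = matrixCoeff ρ t (g * h⁻¹) := by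
  induction t with
  | zero => simp
  | add s t hs ht => simp [hs, ht]
  | tmul v α => simp

end MatrixCoefficients

section PeterWeyl

/-- The Peter–Weyl map: the sum over a family of representations of their matrix coefficients. -/
noncomputable def peterWeyl {k G ι : Type*} [CommSemiring k] [Group G] [DecidableEq ι]
    {V : ι → Type*} [∀ i, AddCommMonoid (V i)] [∀ i, Module k (V i)]
    (ρ : ∀ i, Representation k G (V i)) :
    (DirectSum ι fun i => V i ⊗[k] Module.Dual k (V i)) →ₗ[k] (G → k) :=
  DirectSum.toModule k ι _ fun i => matrixCoeff (ρ i)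

@[simp]
theorem peterWeyl_lof {k G ι : Type*} [CommSemiring k] [Group G] [DecidableEq ι]
    {V : ι → Type*} [∀ i, AddCommMonoid (V i)] [∀ i, Module k (V i)]
    (ρ : ∀ i, Representation k G (V i)) (i : ι) (t : V i ⊗[k] Module.Dual k (V i)) :
    peterWeyl ρ (DirectSum.lof k ι _ i t) = matrixCoeff (ρ i) t := by
  rw [peterWeyl, DirectSum.toModule_lof]

theorem linearCombination_matrixCoeff_tmul {k G V W : Type*} [CommRing k] [Group G] [Fintype G]
    [AddCommGroup V] [Module k V] [AddCommGroup W] [Module k W]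
    (ρ : Representation k G V) (σ : Representation k G W) (v : V) (α : Module.Dual k V) (w : W) :
    Fintype.linearCombination k (σ : G → Module.End k W) (matrixCoeff ρ (v ⊗ₜ α)) w =
      averagedRankOne ρ σ α w v := by
  simp [Fintype.linearCombination_apply, averagedRankOne_apply]

variable {ι : Type*} [DecidableEq ι] {V : ι → Type*}

theorem finrank_smul_linearCombination_peterWeyl {k G : Type*} [Field k] [IsAlgClosed k] [Group G]
    [Fintype G] [∀ i, AddCommGroup (V i)] [∀ i, Module k (V i)] [∀ i, FiniteDimensional k (V i)]
    (ρ : ∀ i, Representation k G (V i)) [∀ i, (ρ i).IsIrreducible]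
    (hρ : ∀ i j, i ≠ j → IsEmpty ((ρ i).Equiv (ρ j)))
    (t : DirectSum ι fun i => V i ⊗[k] Module.Dual k (V i)) (j : ι) :
    (Module.finrank k (V j) : k) •
        Fintype.linearCombination k (ρ j : G → Module.End k (V j)) (peterWeyl ρ t) =
      (Fintype.card G : k) •
        dualTensorHom k (V j) (V j) (TensorProduct.comm k _ _ (t j)) := by
  induction t using DirectSum.induction_on with
  | zero => simp
  | add s t hs ht => simp only [map_add, smul_add, hs, ht, DirectSum.add_apply]
  | of i x =>
    rw [← DirectSum.lof_eq_of k, peterWeyl_lof]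
    induction x with
    | zero => simp
    | add x y hx hy => simp only [map_add, smul_add, hx, hy, DirectSum.add_apply]
    | tmul v α =>
      ext w
      rw [LinearMap.smul_apply, linearCombination_matrixCoeff_tmul]
      obtain rfl | hij := eq_or_ne i j
      · simp [finrank_smul_averagedRankOne_self, DirectSum.lof_apply, mul_smul]
      · have := hρ i j hij
        rw [Subsingleton.elim (averagedRankOne (ρ i) (ρ j) α w) 0, DirectSum.lof_eq_of,
          DirectSum.of_eq_of_ne _ _ _ hij.symm]
        simp

theorem peterWeyl_injective {k G : Type*} [Field k] [IsAlgClosed k] [Group G] [Fintype G]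
    (hG : (Fintype.card G : k) ≠ 0) [∀ i, AddCommGroup (V i)] [∀ i, Module k (V i)]
    [∀ i, FiniteDimensional k (V i)] (ρ : ∀ i, Representation k G (V i))
    [∀ i, (ρ i).IsIrreducible] (hρ : ∀ i j, i ≠ j → IsEmpty ((ρ i).Equiv (ρ j))) :
    Function.Injective (peterWeyl ρ) := by
  refine (injective_iff_map_eq_zero _).2 fun t ht => DFinsupp.ext fun j => ?_
  have card_smul_eq_zero := finrank_smul_linearCombination_peterWeyl ρ hρ t j
  rw [ht, map_zero, smul_zero, eq_comm, smul_eq_zero_iff_right hG] at card_smul_eq_zero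
  rw [DirectSum.zero_apply, ← EmbeddingLike.map_eq_zero_iff (f := TensorProduct.comm k _ _)]
  exact (injective_iff_map_eq_zero _).1 dualTensorHom_bijective.1 _ card_smul_eq_zero

open TannakaDuality.FiniteGroup (leftRegular)

universe u

variable {k G : Type u} [Field k] [Group G]

theorem toSubmodule_le_range_matrixCoeff {V : Type*} [AddCommGroup V] [Module k V]
    {ρ : Representation k G V} {W : Subrepresentation (leftRegular : Representation k G (G → k))}
    (e : W.toRepresentation.Equiv ρ) : W.toSubmodule ≤ LinearMap.range (matrixCoeff ρ) := by
  intro f hf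
  let eval : Module.Dual k W.toSubmodule := LinearMap.proj 1 ∘ₗ W.toSubmodule.subtype
  refine ⟨e ⟨f, hf⟩ ⊗ₜ (eval ∘ₗ e.symm.toLinearMap), funext fun g => ?_⟩
  have symm_apply_eq : e.symm (ρ g⁻¹ (e ⟨f, hf⟩)) = W.toRepresentation g⁻¹ ⟨f, hf⟩ :=
    (e.symm.toIntertwiningMap.isIntertwining _ _ g⁻¹ (e ⟨f, hf⟩)).trans
      (congrArg (W.toRepresentation g⁻¹) (e.symm_apply_apply _))
  rw [matrixCoeff_tmul]
  change eval (e.symm _) = _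
  rw [symm_apply_eq]
  change f (g⁻¹⁻¹ * 1) = f g
  simp

theorem peterWeyl_surjective [Finite G] [NeZero (Nat.card G : k)] [∀ i, AddCommGroup (V i)]
    [∀ i, Module k (V i)] (ρ : ∀ i, Representation k G (V i))
    (hρ : ∀ W : Subrepresentation (leftRegular : Representation k G (G → k)),
      W.toRepresentation.IsIrreducible → ∃ i, Nonempty (W.toRepresentation.Equiv (ρ i))) :
    Function.Surjective (peterWeyl ρ) := by
  refine LinearMap.range_eq_top.1 <|
    eq_top_of_forall_isIrreducible_le leftRegular fun W hW => ?_
  obtain ⟨i, ⟨e⟩⟩ := hρ W hW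
  refine (toSubmodule_le_range_matrixCoeff e).trans ?_
  rintro _ ⟨t, rfl⟩
  exact ⟨DirectSum.lof k ι _ i t, peterWeyl_lof ρ i t⟩

end PeterWeyl

section ConvolutionTensor

variable {k Q M N : Type*} [CommSemiring k] [AddCommMonoid M] [Module k M] [AddCommMonoid N]
  [Module k N]

/-- The convolution `(m ⊗ z) ⊗ (n ⊗ z') ↦ (m ⊗ n) ⊗ z z'`, which exhibits `M ⊗ N ⊗ kQ` as the
tensor product over `kQ` of `M ⊗ kQ` and `N ⊗ kQ`. -/
noncomputable def convolve [Mul Q] : (Q →₀ M) ⊗[k] (Q →₀ N) →ₗ[k] (Q →₀ M ⊗[k] N) :=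
  Finsupp.lmapDomain _ k (fun p : Q × Q => p.1 * p.2) ∘ₗ
    (finsuppTensorFinsupp k k M N Q Q).toLinearMap

@[simp]
theorem convolve_single_tmul_single [Mul Q] (z z' : Q) (m : M) (n : N) :
    convolve (k := k) (Finsupp.single z m ⊗ₜ Finsupp.single z' n) =
      Finsupp.single (z * z') (m ⊗ₜ n) := by
  simp [convolve]

/-- The section `(m ⊗ n) ⊗ z ↦ (m ⊗ z) ⊗ (n ⊗ 1)` of `convolve`. -/
noncomputable def convolveSection [One Q] : (Q →₀ M ⊗[k] N) →ₗ[k] (Q →₀ M) ⊗[k] (Q →₀ N) :=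
  Finsupp.lsum k fun z => TensorProduct.map (Finsupp.lsingle z) (Finsupp.lsingle 1)

@[simp]
theorem convolveSection_single_tmul [One Q] (z : Q) (m : M) (n : N) :
    convolveSection (k := k) (Finsupp.single z (m ⊗ₜ n)) =
      Finsupp.single z m ⊗ₜ Finsupp.single 1 n := by
  simp [convolveSection]

theorem convolve_comp_convolveSection [MulOneClass Q] :
    convolve ∘ₗ convolveSection = (LinearMap.id : (Q →₀ M ⊗[k] N) →ₗ[k] _) := by
  ext z m n : 4
  simp

theorem convolve_surjective [MulOneClass Q] :
    Function.Surjective (convolve (k := k) (Q := Q) (M := M) (N := N)) :=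
  Function.RightInverse.surjective (LinearMap.congr_fun convolve_comp_convolveSection)

theorem convolve_map_tmul_apply [Group Q] {S : Module.End k (Q →₀ M)} {f : Module.End k M} {x : Q}
    (hS : ∀ m z, S (Finsupp.single z m) = Finsupp.single (x * z) (f m))
    (a : Q →₀ M) (b : Q →₀ N) (q : Q) :
    convolve (S a ⊗ₜ[k] b) q = f.rTensor N (convolve (a ⊗ₜ[k] b) (x⁻¹ * q)) := by
  classical
  induction a using Finsupp.induction_linear with
  | zero => simp
  | add a a' ha ha' => simp [TensorProduct.add_tmul, ha, ha']
  | single z m =>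
    induction b using Finsupp.induction_linear with
    | zero => simp
    | add b b' hb hb' => simp [TensorProduct.tmul_add, hb, hb']
    | single z' n =>
      simp only [hS, convolve_single_tmul_single, Finsupp.single_apply, eq_inv_mul_iff_mul_eq,
        mul_assoc]
      split_ifs <;> simp

theorem convolve_tmul_map_apply [Group Q] {T : Module.End k (Q →₀ N)} {f : Module.End k N} {x : Q}
    (hT : ∀ n z, T (Finsupp.single z n) = Finsupp.single (z * x) (f n))
    (a : Q →₀ M) (b : Q →₀ N) (q : Q) :
    convolve (a ⊗ₜ[k] T b) q = f.lTensor M (convolve (a ⊗ₜ[k] b) (q * x⁻¹)) := by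
  classical
  induction a using Finsupp.induction_linear with
  | zero => simp
  | add a a' ha ha' => simp [TensorProduct.add_tmul, ha, ha']
  | single z m =>
    induction b using Finsupp.induction_linear with
    | zero => simp
    | add b b' hb hb' => simp [TensorProduct.tmul_add, hb, hb']
    | single z' n =>
      simp only [hT, convolve_single_tmul_single, Finsupp.single_apply, eq_mul_inv_iff_mul_eq,
        mul_assoc]
      split_ifs <;> simp

end ConvolutionTensor

section BalancedRel

variable {k Q M N : Type} [Field k] [Group Q] [AddCommGroup M] [Module k M] [AddCommGroup N]
  [Module k N] {σ : Representation k Qᵐᵒᵖ (Q →₀ M)} {τ : Representation k Q (Q →₀ N)}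

theorem balancedRel_le_ker_convolve
    (hσ : ∀ (y : Q) (m : M) (z : Q), σ (op y) (Finsupp.single z m) = Finsupp.single (z * y) m)
    (hτ : ∀ (y : Q) (n : N) (z : Q), τ y (Finsupp.single z n) = Finsupp.single (y * z) n) :
    balancedRel k Q σ τ ≤ LinearMap.ker convolve := by
  rw [balancedRel, Submodule.span_le]
  rintro _ ⟨y, a, b, rfl⟩
  suffices h : convolve (σ (op y) a ⊗ₜ[k] b) = convolve (a ⊗ₜ[k] τ y b) by
    simp [h]
  induction a using Finsupp.induction_linear with
  | zero => simp
  | add a a' ha ha' => simp only [map_add, TensorProduct.add_tmul, ha, ha']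
  | single z m =>
    induction b using Finsupp.induction_linear with
    | zero => simp
    | add b b' hb hb' => simp only [map_add, TensorProduct.tmul_add, hb, hb']
    | single z' n => simp [hσ, hτ, mul_assoc]

theorem mkQ_balancedRel_comp_convolveSection_comp_convolve
    (hσ : ∀ (y : Q) (m : M) (z : Q), σ (op y) (Finsupp.single z m) = Finsupp.single (z * y) m)
    (hτ : ∀ (y : Q) (n : N) (z : Q), τ y (Finsupp.single z n) = Finsupp.single (y * z) n) :
    (balancedRel k Q σ τ).mkQ ∘ₗ convolveSection ∘ₗ convolve = (balancedRel k Q σ τ).mkQ := by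
  refine TensorProduct.ext <| Finsupp.lhom_ext fun z m => Finsupp.lhom_ext fun z' n => ?_
  suffices h : Finsupp.single (z * z') m ⊗ₜ[k] Finsupp.single 1 n -
      Finsupp.single z m ⊗ₜ Finsupp.single z' n ∈ balancedRel k Q σ τ by
    simpa [Submodule.Quotient.eq] using h
  refine Submodule.subset_span ⟨z', Finsupp.single z m, Finsupp.single 1 n, ?_⟩
  rw [hσ, hτ, mul_one, sub_eq_add_neg]
  exact congrArg _ (neg_one_smul k _).symm

theorem ker_convolve
    (hσ : ∀ (y : Q) (m : M) (z : Q), σ (op y) (Finsupp.single z m) = Finsupp.single (z * y) m)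
    (hτ : ∀ (y : Q) (n : N) (z : Q), τ y (Finsupp.single z n) = Finsupp.single (y * z) n) :
    LinearMap.ker convolve = balancedRel k Q σ τ := by
  refine le_antisymm (fun t ht => ?_) (balancedRel_le_ker_convolve hσ hτ)
  rw [← Submodule.ker_mkQ (balancedRel k Q σ τ),
    ← mkQ_balancedRel_comp_convolveSection_comp_convolve hσ hτ]
  simp [LinearMap.mem_ker.1 ht]

end BalancedRel

section DirectSum

variable {R ι : Type*} [DecidableEq ι]

theorem ker_lmap_eq_iSup_map_lof [Semiring R] {M N : ι → Type*} [∀ i, AddCommMonoid (M i)]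
    [∀ i, Module R (M i)] [∀ i, AddCommMonoid (N i)] [∀ i, Module R (N i)]
    (f : ∀ i, M i →ₗ[R] N i) :
    LinearMap.ker (DirectSum.lmap f) =
      ⨆ i, (LinearMap.ker (f i)).map (DirectSum.lof R ι M i) := by
  classical
  refine le_antisymm (fun x hx => ?_) (iSup_le fun i => ?_)
  · rw [← DirectSum.sum_support_of x]
    refine sum_mem fun i _ => Submodule.mem_iSup_of_mem i (Submodule.mem_map_of_mem ?_)
    exact DFinsupp.ext_iff.1 hx i
  · rintro _ ⟨x, hx, rfl⟩
    simp [LinearMap.mem_ker.1 hx]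

/-- Formation of finitely supported functions commutes with direct sums. -/
noncomputable def directSumFinsuppEquiv (R : Type*) {ι : Type*} [DecidableEq ι] [Semiring R]
    (Q : Type*) (M : ι → Type*) [∀ i, AddCommMonoid (M i)] [∀ i, Module R (M i)] :
    (DirectSum ι fun i => Q →₀ M i) ≃ₗ[R] (Q →₀ DirectSum ι M) :=
  LinearEquiv.ofLinearMap
    (DirectSum.toModule R ι _ fun i => Finsupp.mapRange.linearMap (DirectSum.lof R ι M i))
    (Finsupp.lsum ℕ fun q => DirectSum.lmap fun _ => Finsupp.lsingle q)
    (by ext q i m : 4; simp)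
    (by ext i q m : 4; simp)

end DirectSum

section BimoduleMap

/-- Currying of finitely supported functions on `L × Q` when `L` is finite. -/
noncomputable def finsuppFunEquivProd (k L Q : Type*) [Semiring k] [Finite L] :
    (Q →₀ (L → k)) ≃ₗ[k] (L × Q →₀ k) :=
  Finsupp.mapRange.linearEquiv (Finsupp.linearEquivFunOnFinite k k L).symm ≪≫ₗ
    (Finsupp.curryLinearEquiv k).symm ≪≫ₗ Finsupp.domLCongr (Equiv.prodComm Q L)

theorem finsuppFunEquivProd_apply {k L Q : Type*} [Semiring k] [Finite L] (u : Q →₀ (L → k))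
    (l : L) (q : Q) : finsuppFunEquivProd k L Q u (l, q) = u q l :=
  rfl

variable {k L Q ι : Type*} [CommSemiring k] [Group L] [Finite L] [DecidableEq ι] {V : ι → Type*}
  [∀ i, AddCommMonoid (V i)] [∀ i, Module k (V i)]

/-- The bimodule map `⨁ᵢ (Vᵢ ⊗ kQ) ⊗ (Vᵢ* ⊗ kQ) → k(L × Q)`: convolve over `Q`, then take matrix
coefficients over `L`. -/
noncomputable def bimoduleMap (Q : Type*) [Mul Q] (ρ : ∀ i, Representation k L (V i)) :
    (DirectSum ι fun i => (Q →₀ V i) ⊗[k] (Q →₀ Module.Dual k (V i))) →ₗ[k] (L × Q →₀ k) :=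
  (finsuppFunEquivProd k L Q).toLinearMap ∘ₗ Finsupp.mapRange.linearMap (peterWeyl ρ) ∘ₗ
    (directSumFinsuppEquiv k Q _).toLinearMap ∘ₗ DirectSum.lmap fun _ => convolve

variable (ρ : ∀ i, Representation k L (V i))

theorem bimoduleMap_lof_apply [Mul Q] (i : ι) (x : (Q →₀ V i) ⊗[k] (Q →₀ Module.Dual k (V i)))
    (l : L) (q : Q) :
    bimoduleMap Q ρ (DirectSum.lof k ι _ i x) (l, q) = matrixCoeff (ρ i) (convolve x q) l := by
  simp [bimoduleMap, finsuppFunEquivProd_apply, directSumFinsuppEquiv]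

theorem bimoduleMap_surjective [MulOneClass Q] (hρ : Function.Surjective (peterWeyl ρ)) :
    Function.Surjective (bimoduleMap Q ρ) :=
  (finsuppFunEquivProd k L Q).surjective.comp <|
    (Finsupp.mapRange_surjective _ (map_zero _) hρ).comp <|
      (directSumFinsuppEquiv k Q _).surjective.comp <|
        (DirectSum.lmap_surjective _).2 fun _ => convolve_surjective

theorem ker_bimoduleMap [Mul Q] (hρ : Function.Injective (peterWeyl ρ)) :
    LinearMap.ker (bimoduleMap Q ρ) =
      ⨆ i, (LinearMap.ker convolve).map
        (DirectSum.lof k ι (fun i => (Q →₀ V i) ⊗[k] (Q →₀ Module.Dual k (V i))) i) := by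
  have mapRange_peterWeyl_injective :
      Function.Injective (Finsupp.mapRange.linearMap (α := Q) (peterWeyl ρ)) :=
    Finsupp.mapRange_injective _ (map_zero _) hρ
  rw [← ker_lmap_eq_iSup_map_lof]
  ext x
  exact (finsuppFunEquivProd k L Q).map_eq_zero_iff.trans <|
    (map_eq_zero_iff _ mapRange_peterWeyl_injective).trans
      (directSumFinsuppEquiv k Q _).map_eq_zero_iff

variable [Group Q] {ρ} {i : ι} {h : L × Q}

theorem bimoduleMap_lof_map_tmul {S : Module.End k (Q →₀ V i)}
    (hS : ∀ v z, S (Finsupp.single z v) = Finsupp.single (h.2 * z) (ρ i h.1 v))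
    (m : Q →₀ V i) (n : Q →₀ Module.Dual k (V i)) :
    bimoduleMap Q ρ (DirectSum.lof k ι _ i (S m ⊗ₜ n)) =
      Finsupp.mapDomain (fun t => h * t) (bimoduleMap Q ρ (DirectSum.lof k ι _ i (m ⊗ₜ n))) := by
  ext ⟨l, q⟩
  refine Eq.trans ?_ (Finsupp.mapDomain_equiv_apply (f := Equiv.mulLeft h) _ _).symm
  rw [bimoduleMap_lof_apply, convolve_map_tmul_apply hS, matrixCoeff_rTensor]
  exact (bimoduleMap_lof_apply ρ i _ _ _).symm

theorem bimoduleMap_lof_tmul_map {T : Module.End k (Q →₀ Module.Dual k (V i))}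
    (hT : ∀ α z, T (Finsupp.single z α) = Finsupp.single (z * h.2) ((ρ i h.1).dualMap α))
    (m : Q →₀ V i) (n : Q →₀ Module.Dual k (V i)) :
    bimoduleMap Q ρ (DirectSum.lof k ι _ i (m ⊗ₜ T n)) =
      Finsupp.mapDomain (fun t => t * h) (bimoduleMap Q ρ (DirectSum.lof k ι _ i (m ⊗ₜ n))) := by
  ext ⟨l, q⟩
  refine Eq.trans ?_ (Finsupp.mapDomain_equiv_apply (f := Equiv.mulRight h) _ _).symm
  rw [bimoduleMap_lof_apply, convolve_tmul_map_apply hT, matrixCoeff_lTensor_dualMap]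
  exact (bimoduleMap_lof_apply ρ i _ _ _).symm

end BimoduleMap

theorem stmt1_general (k : Type) [Field k] [IsAlgClosed k]
    (L : Type) [Group L] [Fintype L] (hL : (Fintype.card L : k) ≠ 0)
    (Q : Type) [Group Q]
    (ι : Type) [DecidableEq ι] (V : ι → Type)
    [∀ i, AddCommGroup (V i)] [∀ i, Module k (V i)] [∀ i, FiniteDimensional k (V i)]
    (ρ : ∀ i, Representation k L (V i))
    (hirr : ∀ i, IsIrreducibleRep k L (ρ i))
    (hpair : ∀ i j, i ≠ j →
      ¬ ∃ e : V i ≃ₗ[k] V j, ∀ l v, e (ρ i l v) = ρ j l (e v))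
    (hcomplete : ∀ (U : Type) [AddCommGroup U] [Module k U] [FiniteDimensional k U]
      (ρU : Representation k L U), IsIrreducibleRep k L ρU →
        ∃ i, ∃ e : U ≃ₗ[k] V i, ∀ l u, e (ρU l u) = ρ i l (e u))
    (ρH : ∀ i, Representation k (L × Q) (Q →₀ V i))
    (hρH : ∀ i (l : L) (x : Q) (v : V i) (z : Q),
      ρH i (l, x) (Finsupp.single z v) = Finsupp.single (x * z) (ρ i l v))
    (rQ : ∀ i, Representation k Qᵐᵒᵖ (Q →₀ V i))
    (hrQ : ∀ i (y : Q) (v : V i) (z : Q),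
      rQ i (op y) (Finsupp.single z v) = Finsupp.single (z * y) v)
    (lQ : ∀ i, Representation k Q (Q →₀ Module.Dual k (V i)))
    (hlQ : ∀ i (y : Q) (α : Module.Dual k (V i)) (z : Q),
      lQ i y (Finsupp.single z α) = Finsupp.single (y * z) α)
    (σH : ∀ i, Representation k (L × Q)ᵐᵒᵖ (Q →₀ Module.Dual k (V i)))
    (hσH : ∀ i (l : L) (x : Q) (α : Module.Dual k (V i)) (z : Q),
      σH i (op (l, x)) (Finsupp.single z α) = Finsupp.single (z * x) (α ∘ₗ ρ i l)) :
    ∃ φ : (DirectSum ι (fun i => (Q →₀ V i) ⊗[k] (Q →₀ Module.Dual k (V i)))) →ₗ[k] ((L × Q) →₀ k),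
      Function.Surjective φ ∧
      LinearMap.ker φ =
        ⨆ i, Submodule.map
          (DirectSum.lof k ι (fun i => (Q →₀ V i) ⊗[k] (Q →₀ Module.Dual k (V i))) i)
          (balancedRel k Q (rQ i) (lQ i)) ∧
      (∀ i (h : L × Q) (m : Q →₀ V i) (n : Q →₀ Module.Dual k (V i)),
        φ (DirectSum.lof k ι (fun i => (Q →₀ V i) ⊗[k] (Q →₀ Module.Dual k (V i))) i
            (ρH i h m ⊗ₜ n)) =
          Finsupp.mapDomain (fun t => h * t)
            (φ (DirectSum.lof k ι (fun i => (Q →₀ V i) ⊗[k] (Q →₀ Module.Dual k (V i))) i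
              (m ⊗ₜ n)))) ∧
      (∀ i (h : L × Q) (m : Q →₀ V i) (n : Q →₀ Module.Dual k (V i)),
        φ (DirectSum.lof k ι (fun i => (Q →₀ V i) ⊗[k] (Q →₀ Module.Dual k (V i))) i
            (m ⊗ₜ σH i (op h) n)) =
          Finsupp.mapDomain (fun t => t * h)
            (φ (DirectSum.lof k ι (fun i => (Q →₀ V i) ⊗[k] (Q →₀ Module.Dual k (V i))) i
              (m ⊗ₜ n)))) := by
  have (i : ι) : (ρ i).IsIrreducible := isIrreducibleRep_iff_isIrreducible.1 (hirr i)
  have : NeZero (Nat.card L : k) := ⟨by rwa [Nat.card_eq_fintype_card]⟩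
  have peterWeyl_inj : Function.Injective (peterWeyl ρ) :=
    peterWeyl_injective hL ρ fun i j hij =>
      ⟨fun e => hpair i j hij ⟨e.toLinearEquiv, e.toIntertwiningMap.isIntertwining _ _⟩⟩
  have peterWeyl_surj : Function.Surjective (peterWeyl ρ) :=
    peterWeyl_surjective ρ fun W hW => by
      obtain ⟨i, e, he⟩ := hcomplete _ _ (isIrreducibleRep_iff_isIrreducible.2 hW)
      exact ⟨i, ⟨.mk e fun l => LinearMap.ext (he l)⟩⟩
  refine ⟨bimoduleMap Q ρ, bimoduleMap_surjective ρ peterWeyl_surj, ?_,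
    fun i h => bimoduleMap_lof_map_tmul (hρH i h.1 h.2),
    fun i h => bimoduleMap_lof_tmul_map (hσH i h.1 h.2)⟩
  exact (ker_bimoduleMap ρ peterWeyl_inj).trans <|
    iSup_congr fun i => congrArg (Submodule.map _) (ker_convolve (hrQ i) (hlQ i))

/-- Let `H = L × Q` with `|L|` invertible in the algebraically closed field `k`.
For each irreducible `kL`-module `V`, let `V⃗ = V ⊗ kQ` (a `(kH,kQ)`-bimodule, realised as
`Q →₀ V`) and `V⃖ = V* ⊗ kQ` (a `(kQ,kH)`-bimodule, realised as `Q →₀ V*`), with the actions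
`(l,x)·(v⊗z)·y = lv ⊗ xzy` and `y·(α⊗z)·(l,x) = αl ⊗ yzx`.  Then
`⨁_{V ∈ Irr(kL)} V⃗ ⊗_{kQ} V⃖ ≅ kH` as `(kH,kH)`-bimodules.  The isomorphism is presented by
a surjective `k`-linear map `φ` on `⨁ i, V⃗ᵢ ⊗[k] V⃖ᵢ` with kernel exactly the sum of the
balancing submodules, intertwining both `H`-actions. -/
theorem stmt1 (k : Type) [Field k] [IsAlgClosed k]
    (L : Type) [Group L] [Fintype L] (hL : (Fintype.card L : k) ≠ 0)
    (Q : Type) [Group Q] [Fintype Q]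
    (ι : Type) [DecidableEq ι] (V : ι → Type)
    [∀ i, AddCommGroup (V i)] [∀ i, Module k (V i)] [∀ i, FiniteDimensional k (V i)]
    (ρ : ∀ i, Representation k L (V i))
    -- the `V i` are pairwise non-isomorphic irreducible `kL`-modules …
    (hirr : ∀ i, IsIrreducibleRep k L (ρ i))
    (hpair : ∀ i j, i ≠ j →
      ¬ ∃ e : V i ≃ₗ[k] V j, ∀ l v, e (ρ i l v) = ρ j l (e v))
    -- … forming a complete set of representatives of the irreducible `kL`-modules
    (hcomplete : ∀ (U : Type) [AddCommGroup U] [Module k U] [FiniteDimensional k U]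
      (ρU : Representation k L U), IsIrreducibleRep k L ρU →
        ∃ i, ∃ e : U ≃ₗ[k] V i, ∀ l u, e (ρU l u) = ρ i l (e u))
    -- the left `H`-action on `V⃗ᵢ = Vᵢ ⊗ kQ`
    (ρH : ∀ i, Representation k (L × Q) (Q →₀ V i))
    (hρH : ∀ i (l : L) (x : Q) (v : V i) (z : Q),
      ρH i (l, x) (Finsupp.single z v) = Finsupp.single (x * z) (ρ i l v))
    -- the right `Q`-action on `V⃗ᵢ`
    (rQ : ∀ i, Representation k Qᵐᵒᵖ (Q →₀ V i))
    (hrQ : ∀ i (y : Q) (v : V i) (z : Q),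
      rQ i (op y) (Finsupp.single z v) = Finsupp.single (z * y) v)
    -- the left `Q`-action on `V⃖ᵢ = Vᵢ* ⊗ kQ`
    (lQ : ∀ i, Representation k Q (Q →₀ Module.Dual k (V i)))
    (hlQ : ∀ i (y : Q) (α : Module.Dual k (V i)) (z : Q),
      lQ i y (Finsupp.single z α) = Finsupp.single (y * z) α)
    -- the right `H`-action on `V⃖ᵢ`
    (σH : ∀ i, Representation k (L × Q)ᵐᵒᵖ (Q →₀ Module.Dual k (V i)))
    (hσH : ∀ i (l : L) (x : Q) (α : Module.Dual k (V i)) (z : Q),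
      σH i (op (l, x)) (Finsupp.single z α) = Finsupp.single (z * x) (α ∘ₗ ρ i l)) :
    ∃ φ : (DirectSum ι (fun i => (Q →₀ V i) ⊗[k] (Q →₀ Module.Dual k (V i)))) →ₗ[k] ((L × Q) →₀ k),
      Function.Surjective φ ∧
      LinearMap.ker φ =
        ⨆ i, Submodule.map
          (DirectSum.lof k ι (fun i => (Q →₀ V i) ⊗[k] (Q →₀ Module.Dual k (V i))) i)
          (balancedRel k Q (rQ i) (lQ i)) ∧
      (∀ i (h : L × Q) (m : Q →₀ V i) (n : Q →₀ Module.Dual k (V i)),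
        φ (DirectSum.lof k ι (fun i => (Q →₀ V i) ⊗[k] (Q →₀ Module.Dual k (V i))) i
            (ρH i h m ⊗ₜ n)) =
          Finsupp.mapDomain (fun t => h * t)
            (φ (DirectSum.lof k ι (fun i => (Q →₀ V i) ⊗[k] (Q →₀ Module.Dual k (V i))) i
              (m ⊗ₜ n)))) ∧
      (∀ i (h : L × Q) (m : Q →₀ V i) (n : Q →₀ Module.Dual k (V i)),
        φ (DirectSum.lof k ι (fun i => (Q →₀ V i) ⊗[k] (Q →₀ Module.Dual k (V i))) i
            (m ⊗ₜ σH i (op h) n)) =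
          Finsupp.mapDomain (fun t => t * h)
            (φ (DirectSum.lof k ι (fun i => (Q →₀ V i) ⊗[k] (Q →₀ Module.Dual k (V i))) i
              (m ⊗ₜ n)))) :=
  stmt1_general k L hL Q ι V ρ hirr hpair hcomplete ρH hρH rQ hrQ lQ hlQ σH hσH
end

section
/- Let k be an algebraically closed field of characteristic p > 0 and G a finite group. The rank over k of the Cartan matrix of kG reduced modulo p equals the number of conjugacy classes of p-regular elements x of G such that C_G(x) is a p'-group (elements of defect zero). -/
/-
On a finite-dimensional algebra `A` consider the bilinear form `β(a, b) = tr (x ↦ a * x * b)`. For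
idempotents `e`, `f` it gives `β(e, f) = dim (e A f) = dim Hom(A e, A f)`, read in `k`. Writing the
projective indecomposables as `P i ≅ A eᵢ`, the Cartan matrix mod `p` is the Gram matrix of `β` on
the `eᵢ`. Commutators and nilpotent elements are in both kernels of `β`, and together with the `eᵢ`
they span `A`, so the rank of the Cartan matrix is the rank of `β`. For `A = kG` the form can also
be evaluated on group elements, which span `A` modulo commutators as soon as every conjugacy class
is represented: `β(g, h⁻¹)` is `|C_G(g)|` if `g = h` and `0` if `g`, `h` are not conjugate. So the
rank is the number of classes with `p ∤ |C_G(g)|`, and such `g` are automatically `p`-regular.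
-/

/-- An indecomposable module: nontrivial, and any direct sum decomposition is trivial. -/
def IsIndecomposableModule (R M : Type) [Ring R] [AddCommGroup M] [Module R M] : Prop :=
  Nontrivial M ∧ ∀ A B : Submodule R M, IsCompl A B → A = ⊥ ∨ B = ⊥

section CommutingActions

open scoped TensorProduct

theorem finrank_eq_length_of_isFiniteLength (K : Type*) {R M : Type*} [Field K] [IsAlgClosed K]
    [CommRing R] [Algebra K R] [AddCommGroup M] [Module R M] [moduleK : Module K M]
    [IsScalarTower K R M] [Module.Finite K M] (finiteLength : IsFiniteLength R M) :
    (Module.finrank K M : ℕ∞) = Module.length R M := by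
  induction finiteLength generalizing moduleK with
  | of_subsingleton =>
    simp only [Module.finrank_zero_of_subsingleton, Nat.cast_zero, Module.length_eq_zero]
  | @of_simple_quotient M _ _ N _ _ ih =>
    have : Module.Finite K N := .of_injective (N.subtype.restrictScalars K) N.subtype_injective
    have : Module.Finite K (M ⧸ N) := .of_surjective (N.mkQ.restrictScalars K) N.mkQ_surjective
    have finrank_add : Module.finrank K (M ⧸ N) + Module.finrank K N = Module.finrank K M :=
      (N.restrictScalars K).finrank_quotient_add_finrank
    rw [Module.length_eq_add_of_exact N.subtype N.mkQ N.subtype_injective N.mkQ_surjective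
      (LinearMap.exact_subtype_mkQ N), Module.length_eq_one R (M ⧸ N), ← ih, ← finrank_add,
      IsSimpleModule.finrank_eq_one_of_isMulCommutative R (M ⧸ N) K, Nat.cast_add, Nat.cast_one,
      add_comm]

theorem finrank_eq_finrank_of_smulCommClass (K k : Type*) {M : Type*} [Field K] [IsAlgClosed K]
    [Field k] [IsAlgClosed k] [AddCommGroup M] [Module K M] [Module k M] [SMulCommClass K k M]
    [Module.Finite K M] [Module.Finite k M] : Module.finrank K M = Module.finrank k M := by
  let _ : Module (K ⊗[ℤ] k) M := TensorProduct.Algebra.module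
  let _ : Algebra k (K ⊗[ℤ] k) := Algebra.TensorProduct.rightAlgebra
  have : IsScalarTower K (K ⊗[ℤ] k) M :=
    IsScalarTower.of_algebraMap_smul (R := K) (A := K ⊗[ℤ] k) fun a x =>
      (TensorProduct.Algebra.smul_def a (1 : k) x).trans (by rw [one_smul])
  have : IsScalarTower k (K ⊗[ℤ] k) M :=
    IsScalarTower.of_algebraMap_smul (R := k) (A := K ⊗[ℤ] k) fun b x =>
      (TensorProduct.Algebra.smul_def (1 : K) b x).trans (by rw [one_smul])
  have finiteLength : IsFiniteLength (K ⊗[ℤ] k) M := isFiniteLength_iff_isNoetherian_isArtinian.2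
    ⟨isNoetherian_of_tower K inferInstance, isArtinian_of_tower K inferInstance⟩
  exact_mod_cast (finrank_eq_length_of_isFiniteLength K finiteLength).trans
    (finrank_eq_length_of_isFiniteLength k finiteLength).symm

theorem finite_linearMap_of_smulCommClass (k : Type*) {A T P : Type*} [Ring k]
    [IsNoetherianRing k] [Ring A] [AddCommGroup T] [Module A T] [Module.Finite A T]
    [AddCommGroup P] [Module A P] [Module k P] [SMulCommClass A k P] [Module.Finite k P] :
    Module.Finite k (T →ₗ[A] P) := by
  obtain ⟨s, hs⟩ := Module.Finite.fg_top (R := A) (M := T)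
  let evalGenerators : (T →ₗ[A] P) →ₗ[k] (s → P) :=
    { toFun := fun f t => f t
      map_add' := fun _ _ => rfl
      map_smul' := fun _ _ => rfl }
  refine .of_injective evalGenerators fun f g hfg => LinearMap.ext_on hs fun t ht => ?_
  exact congrFun hfg ⟨t, ht⟩

-- The action of `k` on `P` need not come from an algebra structure on `A`, so the two dimensions
-- are compared through lengths over `K ⊗ k`.
theorem finrank_linearMap_eq_of_equiv (K : Type*) {k A T P T' P' : Type*}
    [Field K] [IsAlgClosed K] [Field k] [IsAlgClosed k] [Ring A] [Algebra K A]
    [AddCommGroup T] [Module A T] [AddCommGroup P] [Module A P]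
    [Module k P] [SMulCommClass A k P] [Module.Finite k P]
    [AddCommGroup T'] [Module A T'] [Module.Finite A T']
    [AddCommGroup P'] [Module A P'] [Module K P'] [IsScalarTower K A P'] [Module.Finite K P']
    (f : T ≃ₗ[A] T') (g : P ≃ₗ[A] P') :
    Module.finrank k (T →ₗ[A] P) = Module.finrank K (T' →ₗ[A] P') := by
  let _ : Module K P := Module.compHom P (algebraMap K A)
  have : IsScalarTower K A P := .of_algebraMap_smul fun _ _ => rfl
  have : Module.Finite K P := .equiv (g.symm.restrictScalars K)
  have : SMulCommClass K k P := ⟨fun a b x => by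
    rw [← algebraMap_smul A a, ← algebraMap_smul A a, smul_comm]⟩
  have := finite_linearMap_of_smulCommClass K (A := A) (T := T') (P := P)
  have := finite_linearMap_of_smulCommClass k (A := A) (T := T') (P := P)
  let postcompose : (T' →ₗ[A] P) ≃ₗ[K] (T' →ₗ[A] P') :=
    { LinearEquiv.arrowCongrAddEquiv (.refl A T') g with
      map_smul' := fun a h => LinearMap.ext fun t => (g.restrictScalars K).map_smul a (h t) }
  rw [(LinearEquiv.congrLeft P k f).finrank_eq, ← finrank_eq_finrank_of_smulCommClass K k,
    postcompose.finrank_eq]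

end CommutingActions

section GramMatrix

variable {k V W ι : Type*} [Field k] [AddCommGroup V] [Module k V] [AddCommGroup W] [Module k W]
  [Fintype ι]

theorem rank_of_apply_eq_finrank_range (β : V →ₗ[k] W →ₗ[k] k) {v : ι → V} {w : ι → W}
    (hv : Codisjoint (Submodule.span k (Set.range v)) β.ker)
    (hw : Codisjoint (Submodule.span k (Set.range w)) β.flip.ker) :
    (Matrix.of fun i j => β (v i) (w j)).rank = Module.finrank k β.range := by
  let evalFamily : (W →ₗ[k] k) →ₗ[k] (ι → k) := LinearMap.pi fun j => LinearMap.applyₗ (w j)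
  have mulVecLin_eq : (Matrix.of fun i j => β (v i) (w j)).transpose.mulVecLin =
      evalFamily ∘ₗ β ∘ₗ Fintype.linearCombination k v := by
    refine LinearMap.ext fun c => funext fun j => ?_
    simp only [evalFamily, LinearMap.comp_apply, Fintype.linearCombination_apply, map_sum,
      map_smul, LinearMap.pi_apply, LinearMap.applyₗ_apply_apply,
      Matrix.mulVecLin_apply, Matrix.mulVec_transpose]
    rfl
  have range_eq : (β ∘ₗ Fintype.linearCombination k v).range = β.range := by
    rw [LinearMap.range_comp, Fintype.range_linearCombination, Submodule.map_eq_range_iff.2 hv]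
  have injective : Function.Injective (evalFamily.domRestrict β.range) := by
    refine (injective_iff_map_eq_zero _).2 ?_
    rintro ⟨_, a, rfl⟩ h
    have span_le : Submodule.span k (Set.range w) ≤ (β a).ker :=
      Submodule.span_le.2 (Set.range_subset_iff.2 fun j => congrFun h j)
    have ker_le : β.flip.ker ≤ (β a).ker := fun b hb => LinearMap.congr_fun hb a
    exact Subtype.ext (LinearMap.ker_eq_top.1
      (eq_top_iff.2 (hw.eq_top.ge.trans (sup_le span_le ker_le))))
  rw [← Matrix.rank_transpose, Matrix.rank, mulVecLin_eq, LinearMap.range_comp, range_eq,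
    ← LinearMap.range_domRestrict, LinearMap.finrank_range_of_inj injective]

end GramMatrix

section ArtinianRing

variable {A : Type*} [Ring A]

theorem exists_isIdempotentElem_eq_span_of_isCompl {U V : Submodule A A} (h : IsCompl U V) :
    ∃ e : A, IsIdempotentElem e ∧ U = Submodule.span A {e} := by
  obtain ⟨f, hf, rfl⟩ := U.isIdempotentElemEquiv.symm (U.isComplEquivProj ⟨V, h⟩)
  exact ⟨f 1, LinearMap.isIdempotentElem_map_one_iff.2 hf, by
    rw [LinearMap.range_eq_map, ← Ideal.span_one, ← Ideal.submodule_span_eq, LinearMap.map_span,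
      Set.image_one]⟩

theorem mem_jacobson_of_forall_isNilpotent {x : A} (h : ∀ y : A, IsNilpotent (y * x)) :
    x ∈ Ring.jacobson A := by
  rw [← Ideal.jacobson_bot, Ideal.mem_jacobson_iff]
  intro y
  obtain ⟨z, hz⟩ := (h y).isUnit_add_one.exists_left_inv
  exact ⟨z, by rw [Ideal.mem_bot, mul_assoc, sub_eq_zero, ← hz, mul_add, mul_one]⟩

theorem subsingleton_of_jacobson_smul_top [IsSemiprimaryRing A] {P : Type*} [AddCommGroup P]
    [Module A P] (h : Ring.jacobson A • (⊤ : Submodule A P) = ⊤) : Subsingleton P := by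
  obtain ⟨n, hn⟩ := IsSemiprimaryRing.isNilpotent (R := A)
  have smul_top (n : ℕ) : Ring.jacobson A ^ n • (⊤ : Submodule A P) = ⊤ := by
    induction n with
    | zero => rw [Submodule.pow_zero, Ideal.one_eq_top, Submodule.top_smul]
    | succ n ih => rw [Submodule.pow_succ, Submodule.mul_smul, h, ih]
  rw [← Submodule.subsingleton_iff A, ← subsingleton_iff_bot_eq_top, ← smul_top n, hn,
    Submodule.zero_eq_bot, Submodule.bot_smul]

theorem exists_linearMap_apply_not_isNilpotent [IsArtinianRing A] (P : Type*) [AddCommGroup P]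
    [Module A P] [Nontrivial P] [Module.Projective A P] :
    ∃ (φ : P →ₗ[A] A) (v : P), ¬ IsNilpotent (φ v) := by
  by_contra! isNilpotent
  have mem_jacobson (φ : P →ₗ[A] A) (v : P) : φ v ∈ Ring.jacobson A :=
    mem_jacobson_of_forall_isNilpotent fun y => by
      simpa only [map_smul, smul_eq_mul] using isNilpotent φ (y • v)
  obtain ⟨s, hs⟩ := Module.projective_def'.1 ‹Module.Projective A P›
  refine not_subsingleton P
    (subsingleton_of_jacobson_smul_top (A := A) (eq_top_iff.2 fun v _ => ?_))
  rw [← LinearMap.id_apply (R := A) v, ← hs, LinearMap.comp_apply,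
    Finsupp.linearCombination_apply]
  exact Submodule.sum_mem _ fun x _ =>
    Submodule.smul_mem_smul (mem_jacobson (Finsupp.lapply x ∘ₗ s) v) trivial

end ArtinianRing

namespace IsIndecomposableModule

variable {A P : Type} [Ring A] [AddCommGroup P] [Module A P]

theorem bijective_of_bijective_comp (hP : IsIndecomposableModule A P) {R : Type*}
    [AddCommGroup R] [Module A R] [Nontrivial R] {α : R →ₗ[A] P} {β : P →ₗ[A] R}
    (h : Function.Bijective (β ∘ₗ α)) :
    Function.Bijective β := by
  let γ := LinearEquiv.ofBijective (β ∘ₗ α) h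
  let π : P →ₗ[A] P := α ∘ₗ γ.symm ∘ₗ β
  have isIdempotentElem : IsIdempotentElem π := LinearMap.ext fun x =>
    congrArg α (congrArg γ.symm (γ.apply_symm_apply (β x)))
  refine ⟨?_, Function.Surjective.of_comp (g := α) h.surjective⟩
  obtain range_eq_bot | ker_eq_bot :=
    hP.2 _ _ (LinearMap.IsIdempotentElem.isCompl isIdempotentElem)
  · obtain ⟨x, hx⟩ := exists_ne (0 : R)
    have π_apply : π (α x) = α x := congrArg α (γ.symm_apply_apply x)
    refine absurd (γ.map_eq_zero_iff.1 ?_) hx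
    change β (α x) = 0
    rw [← π_apply, LinearMap.range_eq_bot.1 range_eq_bot, LinearMap.zero_apply, map_zero]
  · have injective : Function.Injective ((α ∘ γ.symm) ∘ β) := LinearMap.ker_eq_bot.1 ker_eq_bot
    exact injective.of_comp

theorem exists_isCompl_equiv_of_not_isNilpotent_comp (hP : IsIndecomposableModule A P) {M : Type*}
    [AddCommGroup M] [Module A M] [IsArtinian A M] [IsNoetherian A M] {α : M →ₗ[A] P}
    {β : P →ₗ[A] M} (h : ¬ IsNilpotent (β ∘ₗ α : Module.End A M)) :
    ∃ U V : Submodule A M, IsCompl U V ∧ Nonempty (P ≃ₗ[A] U) := by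
  set f : Module.End A M := β ∘ₗ α
  -- Fitting: for large `n`, `f ^ n` vanishes on one summand and is invertible on the other.
  obtain ⟨n, isCompl, hn⟩ := (f.eventually_isCompl_ker_pow_range_pow.and
    (Filter.eventually_gt_atTop 0)).exists
  set U := LinearMap.range (f ^ n)
  have : Nontrivial U :=
    Submodule.nontrivial_iff_ne_bot.2 fun hU => h ⟨n, LinearMap.range_eq_bot.1 hU⟩
  let α' : U →ₗ[A] P := α ∘ₗ (f ^ (n - 1)).domRestrict U
  let β' : P →ₗ[A] U := Submodule.projectionOnto _ _ isCompl.symm ∘ₗ β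
  have pow_eq (x : M) : (f ^ n) x = β (α ((f ^ (n - 1)) x)) := by
    rw [← Nat.sub_add_cancel hn, pow_succ', Nat.add_sub_cancel]; rfl
  have injective : Function.Injective (β' ∘ₗ α') := by
    refine (injective_iff_map_eq_zero _).2 fun x hx => Subtype.ext ?_
    have pow_apply_mem_ker : (f ^ n) x ∈ LinearMap.ker (f ^ n) := by
      rw [pow_eq x]
      exact (Submodule.projectionOnto_apply_eq_zero_iff isCompl.symm).1 hx
    have disjoint := Submodule.disjoint_def.1 isCompl.disjoint
    exact disjoint _ (disjoint _ pow_apply_mem_ker ⟨x, rfl⟩) x.2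
  exact ⟨U, _, isCompl.symm, ⟨.ofBijective β' (hP.bijective_of_bijective_comp
    (IsArtinian.bijective_of_injective_endomorphism _ injective))⟩⟩

theorem exists_equiv_span_singleton [IsArtinianRing A] [Module.Projective A P]
    (hP : IsIndecomposableModule A P) :
    ∃ e : A, IsIdempotentElem e ∧ Nonempty (P ≃ₗ[A] Submodule.span A {e}) := by
  have := hP.1
  obtain ⟨φ, v, hv⟩ := exists_linearMap_apply_not_isNilpotent (A := A) P
  have not_isNilpotent : ¬ IsNilpotent (φ ∘ₗ LinearMap.toSpanSingleton A P v : Module.End A A) := by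
    intro isNilpotent
    obtain ⟨n, hn⟩ := isNilpotent.map (RingEquiv.moduleEndSelf A).symm
    refine hv ⟨n, MulOpposite.op_injective ?_⟩
    rw [MulOpposite.op_pow, ← one_smul A v, MulOpposite.op_zero]
    exact hn
  obtain ⟨U, V, isCompl, ⟨g⟩⟩ := hP.exists_isCompl_equiv_of_not_isNilpotent_comp not_isNilpotent
  obtain ⟨e, he, rfl⟩ := exists_isIdempotentElem_eq_span_of_isCompl isCompl
  exact ⟨e, he, ⟨g⟩⟩

end IsIndecomposableModule

section PrincipalLeftIdeal

variable {A : Type*} [Ring A] {e f : A}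

/-- The element `e` of the left ideal `A e` it generates, used to identify a homomorphism out of
`A e` with its value there. -/
def spanSingletonGenerator (e : A) : Submodule.span A {e} :=
  ⟨e, Submodule.mem_span_singleton_self e⟩

theorem mul_eq_self_of_mem_span_singleton (he : IsIdempotentElem e) {x : A}
    (hx : x ∈ Submodule.span A {e}) : x * e = x := by
  obtain ⟨a, rfl⟩ := Submodule.mem_span_singleton.1 hx
  rw [smul_eq_mul, mul_assoc, he.eq]

theorem map_eq_smul_map_generator (he : IsIdempotentElem e) {M : Type*} [AddCommGroup M]
    [Module A M] (φ : Submodule.span A {e} →ₗ[A] M) (x : Submodule.span A {e}) :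
    φ x = (x : A) • φ (spanSingletonGenerator e) := by
  rw [← map_smul]
  exact congrArg φ (Subtype.ext (mul_eq_self_of_mem_span_singleton he x.2).symm)

theorem exists_mul_eq_of_span_equiv (he : IsIdempotentElem e) (hf : IsIdempotentElem f)
    (g : Submodule.span A {e} ≃ₗ[A] Submodule.span A {f}) : ∃ a b : A, a * b = e ∧ b * a = f := by
  refine ⟨g (spanSingletonGenerator e), g.symm (spanSingletonGenerator f), ?_, ?_⟩
  · exact congrArg Subtype.val ((map_eq_smul_map_generator hf g.symm.toLinearMap _).symm.trans
      (g.symm_apply_apply _))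
  · exact congrArg Subtype.val ((map_eq_smul_map_generator he g.toLinearMap _).symm.trans
      (g.apply_symm_apply _))

theorem isIdempotentElem_projection_generator (he : IsIdempotentElem e)
    {U V : Submodule A (Submodule.span A {e})} (h : IsCompl U V) (hV : V ≠ ⊥) :
    IsIdempotentElem (U.projection V h (spanSingletonGenerator e) : A) ∧
      Submodule.span A {(U.projection V h (spanSingletonGenerator e) : A)} <
        Submodule.span A {e} := by
  set u := U.projection V h (spanSingletonGenerator e)
  have mul_u (x : Submodule.span A {e}) : (x : A) * u = U.projection V h x :=
    congrArg Subtype.val (map_eq_smul_map_generator he (U.projection V h) x).symm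
  have idempotent : IsIdempotentElem (u : A) :=
    (mul_u u).trans (congrArg Subtype.val
      (Submodule.projection_apply_of_mem_left h (Submodule.projection_apply_mem ..)))
  have span_le : Submodule.span A {(u : A)} ≤ Submodule.span A {e} :=
    (Submodule.span_singleton_le_iff_mem ..).2 u.2
  refine ⟨idempotent, span_le.lt_of_not_ge fun le => hV ?_⟩
  refine (Submodule.eq_bot_iff V).2 fun y hy => Subtype.ext ?_
  rw [← mul_eq_self_of_mem_span_singleton idempotent (le y.2), mul_u,
    Submodule.projection_apply_of_mem_right h hy]

theorem exists_add_eq_of_not_isIndecomposableModule {A : Type} [Ring A] {e : A}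
    (he : IsIdempotentElem e) (ne_zero : e ≠ 0)
    (h : ¬ IsIndecomposableModule A (Submodule.span A {e})) :
    ∃ u v : A, u + v = e ∧
      (IsIdempotentElem u ∧ Submodule.span A {u} < Submodule.span A {e}) ∧
      (IsIdempotentElem v ∧ Submodule.span A {v} < Submodule.span A {e}) := by
  have nontrivial : Nontrivial (Submodule.span A {e}) :=
    Submodule.nontrivial_iff_ne_bot.2 (Submodule.span_singleton_eq_bot.not.2 ne_zero)
  simp only [IsIndecomposableModule, nontrivial, true_and, not_forall, not_or] at h
  obtain ⟨U, V, isCompl, hU, hV⟩ := h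
  exact ⟨_, _, congrArg Subtype.val
      (Submodule.projection_add_projection_eq_self isCompl (spanSingletonGenerator e)),
    isIdempotentElem_projection_generator he isCompl hV,
    isIdempotentElem_projection_generator he isCompl.symm hU⟩

end PrincipalLeftIdeal

section TraceForm

variable (k A : Type*) [Field k] [Ring A] [Algebra k A]

/-- The bilinear form `(a, b) ↦ tr (x ↦ a * x * b)` on an algebra; on idempotents it computes
dimensions of spaces of homomorphisms. -/
noncomputable def regularTraceForm : A →ₗ[k] A →ₗ[k] k :=
  ((LinearMap.mul k (Module.End k A)).compl₁₂ (LinearMap.mul k A) (LinearMap.mul k A).flip).compr₂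
    (LinearMap.trace k A)

/-- The span of the commutators and nilpotent elements of an algebra; it lies in both kernels of
`regularTraceForm`. -/
def commutatorNilpotentSpan : Submodule k A :=
  Submodule.span k ({x | ∃ a b : A, a * b - b * a = x} ∪ {x | IsNilpotent x})

variable {k A}

theorem regularTraceForm_apply (a b : A) : regularTraceForm k A a b =
    LinearMap.trace k A (LinearMap.mulLeft k a * LinearMap.mulRight k b) := rfl

theorem commutator_mem_commutatorNilpotentSpan (a b : A) :
    a * b - b * a ∈ commutatorNilpotentSpan k A :=
  Submodule.subset_span (.inl ⟨a, b, rfl⟩)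

theorem mem_commutatorNilpotentSpan_of_isNilpotent {x : A} (hx : IsNilpotent x) :
    x ∈ commutatorNilpotentSpan k A :=
  Submodule.subset_span (.inr hx)

theorem commutatorNilpotentSpan_le_ker :
    commutatorNilpotentSpan k A ≤ (regularTraceForm k A).ker := by
  refine Submodule.span_le.2 (Set.union_subset ?_ fun x hx => LinearMap.ext fun c => ?_)
  · rintro _ ⟨a, b, rfl⟩
    refine LinearMap.ext fun c => ?_
    rw [map_sub, LinearMap.sub_apply, LinearMap.zero_apply, sub_eq_zero, regularTraceForm_apply,
      regularTraceForm_apply, LinearMap.mulLeft_mul, LinearMap.mulLeft_mul,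
      ← Module.End.mul_eq_comp, ← Module.End.mul_eq_comp, mul_assoc, LinearMap.trace_mul_comm,
      mul_assoc, mul_assoc, (LinearMap.commute_mulLeft_right a c).eq]
  · have isNilpotent : IsNilpotent (LinearMap.mulLeft k x * LinearMap.mulRight k c) :=
      (LinearMap.commute_mulLeft_right x c).isNilpotent_mul_right
        ((LinearMap.isNilpotent_mulLeft_iff k x).2 hx)
    exact (LinearMap.isNilpotent_trace_of_isNilpotent isNilpotent).eq_zero

theorem commutatorNilpotentSpan_le_ker_flip :
    commutatorNilpotentSpan k A ≤ (regularTraceForm k A).flip.ker := by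
  refine Submodule.span_le.2 (Set.union_subset ?_ fun x hx => LinearMap.ext fun c => ?_)
  · rintro _ ⟨a, b, rfl⟩
    refine LinearMap.ext fun c => ?_
    rw [LinearMap.flip_apply, map_sub, LinearMap.zero_apply, sub_eq_zero, regularTraceForm_apply,
      regularTraceForm_apply, LinearMap.mulRight_mul, LinearMap.mulRight_mul,
      ← Module.End.mul_eq_comp, ← Module.End.mul_eq_comp, ← mul_assoc, LinearMap.trace_mul_comm,
      ← mul_assoc, ← mul_assoc, (LinearMap.commute_mulLeft_right c a).eq]
  · have isNilpotent : IsNilpotent (LinearMap.mulLeft k c * LinearMap.mulRight k x) :=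
      (LinearMap.commute_mulLeft_right c x).isNilpotent_mul_left
        ((LinearMap.isNilpotent_mulRight_iff k x).2 hx)
    exact (LinearMap.isNilpotent_trace_of_isNilpotent isNilpotent).eq_zero

end TraceForm

section HomDimension

variable (k : Type*) {A : Type*} [Field k] [Ring A] [Algebra k A] [Module.Finite k A] {e f : A}

theorem finrank_linearMap_span_singleton (he : IsIdempotentElem e) (hf : IsIdempotentElem f) :
    (Module.finrank k (Submodule.span A {e} →ₗ[A] Submodule.span A {f}) : k) =
      regularTraceForm k A e f := by
  let evalGenerator : (Submodule.span A {e} →ₗ[A] Submodule.span A {f}) →ₗ[k] A :=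
    (Submodule.span A {f}).subtype.restrictScalars k ∘ₗ
      LinearMap.applyₗ' k (spanSingletonGenerator e)
  have idempotent : IsIdempotentElem (LinearMap.mulLeft k e * LinearMap.mulRight k f) := by
    refine LinearMap.ext fun x => ?_
    change e * (e * (x * f) * f) = e * (x * f)
    rw [mul_assoc e, mul_assoc x, hf.eq, ← mul_assoc e, he.eq]
  have range_eq : LinearMap.range evalGenerator =
      LinearMap.range (LinearMap.mulLeft k e * LinearMap.mulRight k f) := by
    refine le_antisymm ?_ ?_
    · rintro _ ⟨φ, rfl⟩
      set y := φ (spanSingletonGenerator e)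
      refine ⟨y, ?_⟩
      change e * (y * f) = y
      rw [mul_eq_self_of_mem_span_singleton hf y.2]
      exact congrArg Subtype.val (map_eq_smul_map_generator he φ (spanSingletonGenerator e)).symm
    · rintro _ ⟨x, rfl⟩
      exact ⟨(LinearMap.toSpanSingleton A (Submodule.span A {f})
        ⟨x * f, Submodule.mem_span_singleton.2 ⟨x, rfl⟩⟩).domRestrict _, rfl⟩
  have injective : Function.Injective evalGenerator := fun φ ψ h => LinearMap.ext fun x => by
    rw [map_eq_smul_map_generator he φ, map_eq_smul_map_generator he ψ]
    exact congrArg _ (Subtype.ext h)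
  rw [regularTraceForm_apply, (LinearMap.IsIdempotentElem.isProj_range _ idempotent).trace,
    ← range_eq, LinearMap.finrank_range_of_inj injective]

end HomDimension

section Idempotents

open Polynomial

variable {k A : Type*} [Field k] [Ring A] [Algebra k A]

theorem mem_span_isIdempotentElem_of_aeval_nodal_eq_zero {x : A} {s : Finset k}
    (hx : aeval x (Lagrange.nodal s id) = 0) :
    x ∈ Submodule.span k {e : A | IsIdempotentElem e} := by
  classical
  have injOn : Set.InjOn (id : k → k) s := Function.injective_id.injOn
  have aeval_eq_of_eval_eq {f g : k[X]} (h : ∀ r ∈ s, f.eval r = g.eval r) :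
      aeval x f = aeval x g := by
    have nodal_dvd : Lagrange.nodal s id ∣ f - g :=
      Finset.prod_dvd_of_coprime
        (fun _ _ _ _ hab => pairwise_coprime_X_sub_C Function.injective_id hab) fun r hr =>
        dvd_iff_isRoot.2 (by rw [id, IsRoot, eval_sub, h r hr, sub_self])
    exact sub_eq_zero.1 ((map_sub _ f g).symm.trans
      (zero_dvd_iff.1 (hx ▸ map_dvd (aeval x) nodal_dvd)))
  have isIdempotentElem (r : k) (hr : r ∈ s) :
      IsIdempotentElem (aeval x (Lagrange.basis s id r)) := by
    rw [IsIdempotentElem, ← map_mul]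
    refine aeval_eq_of_eval_eq fun t ht => ?_
    rw [eval_mul]
    obtain rfl | hrt := eq_or_ne r t
    · have eval_eq_one : eval r (Lagrange.basis s id r) = 1 := Lagrange.eval_basis_self injOn hr
      rw [eval_eq_one, one_mul]
    · have eval_eq_zero : eval t (Lagrange.basis s id r) = 0 :=
        Lagrange.eval_basis_of_ne (v := id) hrt ht
      rw [eval_eq_zero, zero_mul]
  have aeval_X_eq : aeval x X = aeval x (Lagrange.interpolate s id id) :=
    aeval_eq_of_eval_eq fun r hr =>
      eval_X.trans (Lagrange.eval_interpolate_at_node id injOn hr).symm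
  rw [← aeval_X (R := k) x, aeval_X_eq, Lagrange.interpolate_apply, map_sum]
  refine Submodule.sum_mem _ fun r hr => ?_
  rw [map_mul, aeval_C, ← Algebra.smul_def]
  exact Submodule.smul_mem _ _ (Submodule.subset_span (isIdempotentElem r hr))

theorem mem_span_isIdempotentElem_of_separable_minpoly {x : A} (integral : IsIntegral k x)
    (separable : (minpoly k x).Separable) (splits : (minpoly k x).Splits) :
    x ∈ Submodule.span k {e : A | IsIdempotentElem e} := by
  classical
  refine mem_span_isIdempotentElem_of_aeval_nodal_eq_zero (s := (minpoly k x).roots.toFinset) ?_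
  rw [Lagrange.nodal, Finset.prod, Multiset.toFinset_val,
    (nodup_roots separable).dedup]
  exact (congrArg (aeval x)
    (splits.eq_prod_roots_of_monic (minpoly.monic integral)).symm).trans (minpoly.aeval k x)

theorem exists_add_eq_separable_minpoly_isNilpotent [PerfectField k] [Module.Finite k A] (x : A) :
    ∃ s n : A, s + n = x ∧ (minpoly k s).Separable ∧ IsNilpotent n := by
  obtain ⟨n, n_mem, s, s_mem, isNilpotent, isSemisimple, lmul_eq⟩ :=
    Module.End.exists_isNilpotent_isSemisimple (f := Algebra.lmul k A x)
  have mem_range {y : Module.End k A} (hy : y ∈ Algebra.adjoin k {Algebra.lmul k A x}) :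
      ∃ a : A, Algebra.lmul k A a = y := by
    obtain ⟨f, rfl⟩ := (Algebra.adjoin_singleton_eq_range_aeval k _).le hy
    exact ⟨aeval x f, (aeval_algHom_apply (Algebra.lmul k A) x f).symm⟩
  obtain ⟨n, rfl⟩ := mem_range n_mem
  obtain ⟨s, rfl⟩ := mem_range s_mem
  have injective := Algebra.lmul_injective (R := k) (A := A)
  refine ⟨s, n, injective ?_, ?_, (IsNilpotent.map_iff injective).1 isNilpotent⟩
  · rw [map_add, add_comm, ← lmul_eq]
  · rw [PerfectField.separable_iff_squarefree, ← minpoly.algHom_eq _ injective]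
    exact isSemisimple.minpoly_squarefree

theorem span_isIdempotentElem_sup_commutatorNilpotentSpan [IsAlgClosed k] [Module.Finite k A] :
    Submodule.span k {e : A | IsIdempotentElem e} ⊔ commutatorNilpotentSpan k A = ⊤ := by
  refine eq_top_iff.2 fun x _ => ?_
  obtain ⟨s, n, rfl, separable, isNilpotent⟩ :=
    exists_add_eq_separable_minpoly_isNilpotent (k := k) x
  exact Submodule.add_mem_sup
    (mem_span_isIdempotentElem_of_separable_minpoly (.of_finite k s) separable
      (IsAlgClosed.splits _)) (mem_commutatorNilpotentSpan_of_isNilpotent isNilpotent)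

end Idempotents

section Completeness

variable {A : Type} [Ring A]

theorem projective_span_singleton {e : A} (he : IsIdempotentElem e) :
    Module.Projective A (Submodule.span A {e}) :=
  .of_split (Submodule.subtype _) (LinearMap.toSpanSingleton A _ (spanSingletonGenerator e))
    (LinearMap.ext fun x => (map_eq_smul_map_generator he LinearMap.id x).symm)

theorem mem_addSubmonoid_of_isIdempotentElem [IsArtinianRing A] {S : AddSubmonoid A}
    (mem_of_isIndecomposableModule : ∀ e : A, IsIdempotentElem e →
      IsIndecomposableModule A (Submodule.span A {e}) → e ∈ S) {e : A} (he : IsIdempotentElem e) :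
    e ∈ S := by
  induction hU : Submodule.span A {e} using WellFoundedLT.induction generalizing e with
  | ind U ih =>
    subst hU
    obtain rfl | ne_zero := eq_or_ne e 0
    · exact zero_mem S
    by_cases indecomposable : IsIndecomposableModule A (Submodule.span A {e})
    · exact mem_of_isIndecomposableModule e he indecomposable
    · obtain ⟨u, v, rfl, ⟨hu, u_lt⟩, ⟨hv, v_lt⟩⟩ :=
        exists_add_eq_of_not_isIndecomposableModule he ne_zero indecomposable
      exact add_mem (ih _ u_lt hu rfl) (ih _ v_lt hv rfl)

theorem span_range_sup_commutatorNilpotentSpan {k : Type*} [Field k] [IsAlgClosed k] [Algebra k A]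
    [Module.Finite k A] {ι : Type*} {e : ι → A} (he : ∀ i, IsIdempotentElem (e i))
    (complete : ∀ f : A, IsIdempotentElem f → IsIndecomposableModule A (Submodule.span A {f}) →
      ∃ i, Nonempty (Submodule.span A {f} ≃ₗ[A] Submodule.span A {e i})) :
    Submodule.span k (Set.range e) ⊔ commutatorNilpotentSpan k A = ⊤ := by
  have : IsArtinianRing A := .of_finite k A
  set S := Submodule.span k (Set.range e) ⊔ commutatorNilpotentSpan k A
  have idempotent_mem {f : A} (hf : IsIdempotentElem f) : f ∈ S := by
    refine mem_addSubmonoid_of_isIdempotentElem (S := S.toAddSubmonoid)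
      (fun f hf indecomposable => ?_) hf
    obtain ⟨i, ⟨g⟩⟩ := complete f hf indecomposable
    obtain ⟨a, b, rfl, hba⟩ := exists_mul_eq_of_span_equiv hf (he i) g
    rw [← add_sub_cancel (b * a) (a * b), hba]
    exact Submodule.add_mem_sup (Submodule.subset_span ⟨i, rfl⟩)
      (hba ▸ commutator_mem_commutatorNilpotentSpan a b)
  rw [eq_top_iff, ← span_isIdempotentElem_sup_commutatorNilpotentSpan]
  exact sup_le (Submodule.span_le.2 fun f hf => idempotent_mem hf) le_sup_right

theorem rank_finrank_linearMap_eq_finrank_range_regularTraceForm {k : Type*} [Field k]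
    [IsAlgClosed k] [Algebra k A] [Module.Finite k A] {ι : Type*} [Fintype ι] {P : ι → Type}
    [∀ i, AddCommGroup (P i)] [∀ i, Module k (P i)] [∀ i, Module A (P i)]
    [∀ i, SMulCommClass A k (P i)] [∀ i, Module.Finite k (P i)]
    (projective : ∀ i, Module.Projective A (P i))
    (indecomposable : ∀ i, IsIndecomposableModule A (P i))
    (complete : ∀ (M : Type) [AddCommGroup M] [Module A M], Module.Finite A M →
      Module.Projective A M → IsIndecomposableModule A M → ∃ i, Nonempty (M ≃ₗ[A] P i)) :
    (Matrix.of fun i j => (Module.finrank k (P i →ₗ[A] P j) : k)).rank =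
      Module.finrank k (regularTraceForm k A).range := by
  have : IsArtinianRing A := .of_finite k A
  choose e he equiv using fun i => (indecomposable i).exists_equiv_span_singleton
  have finrank_eq (i j : ι) : (Module.finrank k (P i →ₗ[A] P j) : k) =
      regularTraceForm k A (e i) (e j) := by
    rw [finrank_linearMap_eq_of_equiv k (equiv i).some (equiv j).some,
      finrank_linearMap_span_singleton k (he i) (he j)]
  have span_eq_top : Submodule.span k (Set.range e) ⊔ commutatorNilpotentSpan k A = ⊤ :=
    span_range_sup_commutatorNilpotentSpan he fun f hf hind => by
      obtain ⟨i, ⟨g⟩⟩ := complete _ inferInstance (projective_span_singleton hf) hind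
      exact ⟨i, ⟨g.trans (equiv i).some⟩⟩
  have codisjoint := codisjoint_iff.2 span_eq_top
  simp only [finrank_eq]
  exact rank_of_apply_eq_finrank_range _ (codisjoint.mono_right commutatorNilpotentSpan_le_ker)
    (codisjoint.mono_right commutatorNilpotentSpan_le_ker_flip)

end Completeness

section GroupAlgebra

open MonoidAlgebra

variable {k G : Type*} [Field k] [Group G]

theorem regularTraceForm_single_single_inv [Finite G] (g h : G) :
    regularTraceForm k (MonoidAlgebra k G) (single g 1) (single h⁻¹ 1) =
      (Nat.card {x : G // g * x = x * h} : k) := by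
  classical
  have := Fintype.ofFinite G
  let b : Module.Basis G k (MonoidAlgebra k G) := MonoidAlgebra.basis G k
  have apply_basis (x : G) : LinearMap.mulLeft k (single g (1 : k))
      (LinearMap.mulRight k (single h⁻¹ (1 : k)) (b x)) = b (g * (x * h⁻¹)) := by
    simp [b, single_mul_single]
  have diag_eq (x : G) : (LinearMap.toMatrix b b (LinearMap.mulLeft k (single g (1 : k)) *
      LinearMap.mulRight k (single h⁻¹ (1 : k)))).diag x = if g * x = x * h then 1 else 0 := by
    rw [Matrix.diag_apply, LinearMap.toMatrix_apply, Module.End.mul_apply, apply_basis,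
      Module.Basis.repr_self, Finsupp.single_apply, ← mul_assoc]
    exact if_congr mul_inv_eq_iff_eq_mul rfl rfl
  rw [regularTraceForm_apply, LinearMap.trace_eq_matrix_trace k b, Matrix.trace,
    Finset.sum_congr rfl fun x _ => diag_eq x, Finset.sum_boole, Nat.card_eq_fintype_card,
    Fintype.card_subtype]

theorem regularTraceForm_single_single_inv_self [Finite G] (g : G) :
    regularTraceForm k (MonoidAlgebra k G) (single g 1) (single g⁻¹ 1) =
      (Nat.card (Subgroup.centralizer {g}) : k) := by
  rw [regularTraceForm_single_single_inv]
  exact congrArg Nat.cast (Nat.card_congr (Equiv.subtypeEquivRight fun x =>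
    eq_comm.trans Subgroup.mem_centralizer_singleton_iff.symm))

theorem regularTraceForm_single_single_inv_of_not_isConj [Finite G] {g h : G} (hgh : ¬ IsConj g h) :
    regularTraceForm k (MonoidAlgebra k G) (single g 1) (single h⁻¹ 1) = 0 := by
  have : IsEmpty {x : G // g * x = x * h} :=
    ⟨fun x => hgh (isConj_comm.1 (isConj_iff.2 ⟨x, by rw [← x.2, mul_inv_cancel_right]⟩))⟩
  rw [regularTraceForm_single_single_inv, Nat.card_of_isEmpty, Nat.cast_zero]

theorem single_sub_single_mem_commutatorNilpotentSpan {g h : G} (hgh : IsConj g h) :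
    single g 1 - single h 1 ∈ commutatorNilpotentSpan k (MonoidAlgebra k G) := by
  obtain ⟨c, rfl⟩ := isConj_iff.1 hgh
  convert commutator_mem_commutatorNilpotentSpan (single c⁻¹ (1 : k)) (single (c * g) 1) using 2
  · rw [single_mul_single, inv_mul_cancel_left, one_mul]
  · rw [single_mul_single, one_mul]

theorem span_range_single_sup_commutatorNilpotentSpan {ι : Type*} {ρ : ι → G}
    (surjective : Function.Surjective (ConjClasses.mk ∘ ρ)) :
    Submodule.span k (Set.range fun i => single (ρ i) (1 : k)) ⊔
      commutatorNilpotentSpan k (MonoidAlgebra k G) = ⊤ := by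
  rw [eq_top_iff, ← (MonoidAlgebra.basis G k).span_eq, Submodule.span_le]
  rintro _ ⟨g, rfl⟩
  obtain ⟨i, hi⟩ := surjective (ConjClasses.mk g)
  rw [basis_apply, ← add_sub_cancel (single (ρ i) (1 : k)) (single g 1)]
  exact Submodule.add_mem_sup (Submodule.subset_span ⟨i, rfl⟩)
    (single_sub_single_mem_commutatorNilpotentSpan
      (ConjClasses.mk_eq_mk_iff_isConj.1 hi.symm))

theorem isConj_inv_inv {g h : G} (hgh : IsConj g h) : IsConj g⁻¹ h⁻¹ := by
  obtain ⟨c, rfl⟩ := isConj_iff.1 hgh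
  exact isConj_iff.2 ⟨c, conj_inv.symm⟩

theorem finrank_range_regularTraceForm_monoidAlgebra (k : Type*) [Field k] [Finite G]
    {ρ : ConjClasses G → G} (mk_rep : ∀ C, ConjClasses.mk (ρ C) = C) :
    Module.finrank k (regularTraceForm k (MonoidAlgebra k G)).range =
      Nat.card {C // (Nat.card (Subgroup.centralizer {ρ C}) : k) ≠ 0} := by
  classical
  have := Fintype.ofFinite (ConjClasses G)
  have surjective : Function.Surjective (ConjClasses.mk ∘ ρ) := fun C => ⟨C, mk_rep C⟩
  have surjective_inv : Function.Surjective (ConjClasses.mk ∘ fun C => (ρ C)⁻¹) := fun C => by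
    have isConj := isConj_inv_inv
      (ConjClasses.mk_eq_mk_iff_isConj.1 (mk_rep (ConjClasses.mk (ρ C)⁻¹)))
    rw [inv_inv] at isConj
    exact ⟨_, (ConjClasses.mk_eq_mk_iff_isConj.2 isConj).trans (mk_rep C)⟩
  have matrix_eq : (Matrix.of fun C D => regularTraceForm k (MonoidAlgebra k G)
      (single (ρ C) 1) (single (ρ D)⁻¹ 1)) =
      Matrix.diagonal fun C => (Nat.card (Subgroup.centralizer {ρ C}) : k) := by
    ext C D
    obtain rfl | ne := eq_or_ne C D
    · rw [Matrix.of_apply, regularTraceForm_single_single_inv_self, Matrix.diagonal_apply_eq]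
    · have not_isConj : ¬ IsConj (ρ C) (ρ D) := fun isConj =>
        ne (by rw [← mk_rep C, ← mk_rep D, ConjClasses.mk_eq_mk_iff_isConj.2 isConj])
      rw [Matrix.of_apply, regularTraceForm_single_single_inv_of_not_isConj not_isConj,
        Matrix.diagonal_apply_ne _ ne]
  rw [← rank_of_apply_eq_finrank_range _
    ((codisjoint_iff.2 (span_range_single_sup_commutatorNilpotentSpan surjective)).mono_right
      commutatorNilpotentSpan_le_ker)
    ((codisjoint_iff.2 (span_range_single_sup_commutatorNilpotentSpan surjective_inv)).mono_right
      commutatorNilpotentSpan_le_ker_flip), matrix_eq, Matrix.rank_diagonal,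
    Nat.card_eq_fintype_card]

theorem natCard_centralizer_eq_of_isConj {g h : G} (hgh : IsConj g h) :
    Nat.card (Subgroup.centralizer {g}) = Nat.card (Subgroup.centralizer {h}) := by
  rw [Subgroup.nat_card_centralizer_nat_card_stabilizer,
    Subgroup.nat_card_centralizer_nat_card_stabilizer]
  have orbitRel : MulAction.orbitRel (ConjAct G) G g h := by rwa [ConjAct.orbitRel_conjAct]
  exact Nat.card_congr (MulAction.stabilizerEquivStabilizerOfOrbitRel orbitRel).toEquiv

theorem exists_mk_eq_coprime_not_dvd_natCard_centralizer_iff {p : ℕ} (hp : p.Prime) (g : G) :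
    (∃ x : G, ConjClasses.mk x = ConjClasses.mk g ∧ (orderOf x).Coprime p ∧
        ¬ p ∣ Nat.card (Subgroup.centralizer {x})) ↔
      ¬ p ∣ Nat.card (Subgroup.centralizer {g}) := by
  constructor
  · rintro ⟨x, hx, -, not_dvd⟩
    rwa [← natCard_centralizer_eq_of_isConj (ConjClasses.mk_eq_mk_iff_isConj.1 hx)]
  · intro not_dvd
    have orderOf_dvd : orderOf g ∣ Nat.card (Subgroup.centralizer {g}) :=
      Subgroup.orderOf_dvd_natCard _ (Subgroup.mem_centralizer_singleton_iff.2 rfl)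
    exact ⟨g, rfl, (((hp.coprime_iff_not_dvd).2 not_dvd).coprime_dvd_right orderOf_dvd).symm,
      not_dvd⟩

end GroupAlgebra

theorem stmt12_general (p : ℕ) (hp : p.Prime) (k : Type) [Field k] [IsAlgClosed k] [CharP k p]
    (G : Type) [Group G] [Finite G] (ι : Type) [Fintype ι]
    (P : ι → Type) [∀ i, AddCommGroup (P i)] [∀ i, Module k (P i)]
    [∀ i, Module (MonoidAlgebra k G) (P i)]
    [∀ i, SMulCommClass (MonoidAlgebra k G) k (P i)]
    [∀ i, Module.Finite k (P i)]
    (hproj : ∀ i, Module.Projective (MonoidAlgebra k G) (P i))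
    (hind : ∀ i, IsIndecomposableModule (MonoidAlgebra k G) (P i))
    (hcomplete : ∀ (M : Type) [AddCommGroup M] [Module (MonoidAlgebra k G) M],
      Module.Finite (MonoidAlgebra k G) M → Module.Projective (MonoidAlgebra k G) M →
      IsIndecomposableModule (MonoidAlgebra k G) M →
      ∃ i, Nonempty (M ≃ₗ[MonoidAlgebra k G] P i)) :
    (Matrix.of fun T S : ι =>
        ((Module.finrank k (P T →ₗ[MonoidAlgebra k G] P S) : ℕ) : k)).rank =
      Nat.card {C : ConjClasses G // ∃ x : G, ConjClasses.mk x = C ∧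
        (orderOf x).Coprime p ∧ ¬ p ∣ Nat.card ↥(Subgroup.centralizer {x})} := by
  obtain ⟨ρ, mk_rep⟩ := ConjClasses.mk_surjective (α := G).hasRightInverse
  rw [rank_finrank_linearMap_eq_finrank_range_regularTraceForm hproj hind hcomplete,
    finrank_range_regularTraceForm_monoidAlgebra k mk_rep]
  refine Nat.card_congr (Equiv.subtypeEquivRight fun C => ?_)
  rw [Ne, CharP.cast_eq_zero_iff k p,
    ← exists_mk_eq_coprime_not_dvd_natCard_centralizer_iff hp, mk_rep]

/-- Let `k` be algebraically closed of characteristic `p > 0` and `G` a finite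
group.  Let `(P i)` be a complete set of representatives of the indecomposable projective
`kG`-modules (the projective covers of the simple `kG`-modules), so that the Cartan matrix of
`kG` is `(c_{T,S}) = (dim_k Hom_{kG}(P T, P S))`.  Then the rank over `k` of the Cartan matrix
reduced mod `p` (its entries being cast into `k`, which has characteristic `p`) equals the
number of conjugacy classes of `p`-regular elements `x` of `G` of defect zero, i.e. with
`C_G(x)` a `p'`-group. -/
theorem stmt12 (p : ℕ) (hp : p.Prime) (k : Type) [Field k] [IsAlgClosed k] [CharP k p]
    (G : Type) [Group G] [Fintype G]
    (ι : Type) [Fintype ι] [DecidableEq ι]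
    (P : ι → Type) [∀ i, AddCommGroup (P i)] [∀ i, Module k (P i)]
    [∀ i, Module (MonoidAlgebra k G) (P i)]
    [∀ i, SMulCommClass (MonoidAlgebra k G) k (P i)]
    [∀ i, Module.Finite k (P i)]
    (hproj : ∀ i, Module.Projective (MonoidAlgebra k G) (P i))
    (hind : ∀ i, IsIndecomposableModule (MonoidAlgebra k G) (P i))
    (hpairwise : ∀ i j : ι, i ≠ j → IsEmpty (P i ≃ₗ[MonoidAlgebra k G] P j))
    (hcomplete : ∀ (M : Type) [AddCommGroup M] [Module (MonoidAlgebra k G) M],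
      Module.Finite (MonoidAlgebra k G) M → Module.Projective (MonoidAlgebra k G) M →
      IsIndecomposableModule (MonoidAlgebra k G) M →
      ∃ i, Nonempty (M ≃ₗ[MonoidAlgebra k G] P i)) :
    (Matrix.of fun T S : ι =>
        ((Module.finrank k (P T →ₗ[MonoidAlgebra k G] P S) : ℕ) : k)).rank =
      Nat.card {C : ConjClasses G // ∃ x : G, ConjClasses.mk x = C ∧
        (orderOf x).Coprime p ∧ ¬ p ∣ Nat.card ↥(Subgroup.centralizer {x})} :=
  stmt12_general p hp k G ι P hproj hind hcomplete
end
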